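/- For every integer d ≥ 1 there exists a constant K_d > 0, depending only on d, such that for every integer n ≥ 2 and every degree-d polynomial threshold function f = sgn(p) on {-1,1}^n with α(p) ≤ (K_d · log n)^{−2d}, one has BSA[f] ≤ α(p). -/

import Mathlib

open Finset
open scoped Classical

/-- The embedding of `Bool` into `{-1, 1} ⊆ ℝ`. -/
noncomputable def chi (b : Bool) : ℝ := if b then 1 else -1

/-- Flip the `i`-th coordinate of a point of the Boolean cube. -/
def flipAt {n : ℕ} (x : Fin n → Bool) (i : Fin n) : Fin n → Bool :=
  Function.update x i (!x i)

/-- The sensitivity of `f` at `x`: the number of coordinates whose flip changes `f`. -/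
noncomputable def sens {n : ℕ} (f : (Fin n → Bool) → ℝ) (x : Fin n → Bool) : ℕ :=
  (Finset.univ.filter (fun i => f (flipAt x i) ≠ f x)).card

/-- The Boolean surface area `BSA[f] = E_x √(s_f(x))`, `x` uniform on the cube. -/
noncomputable def BSA {n : ℕ} (f : (Fin n → Bool) → ℝ) : ℝ :=
  (∑ x : Fin n → Bool, Real.sqrt (sens f x)) / 2 ^ n

/-- Evaluation of a polynomial at a point of the cube `{-1,1}^n`. -/
noncomputable def pev {n : ℕ} (p : MvPolynomial (Fin n) ℝ) (x : Fin n → Bool) : ℝ :=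
  MvPolynomial.eval (fun i => chi (x i)) p

/-- `f` is a degree-`d` polynomial threshold function: `f = sgn p` for some multilinear
polynomial `p` of total degree at most `d` that is nonvanishing on the cube. -/
def IsPTF (d : ℕ) {n : ℕ} (f : (Fin n → Bool) → ℝ) : Prop :=
  ∃ p : MvPolynomial (Fin n) ℝ,
    (∀ m ∈ p.support, ∀ i, m i ≤ 1) ∧ p.totalDegree ≤ d ∧
    ∀ x, pev p x ≠ 0 ∧ f x = Real.sign (pev p x)

/-- The quantity `α(p) = E_{A,B} min(1, (D_B p(A))² / p(A)²)` with `A, B` independent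
uniform on the cube, where `D_B p(A) = Σ_j B_j (p(A) - p(A^{⊕j}))/2`. -/
noncomputable def alphaP {n : ℕ} (p : MvPolynomial (Fin n) ℝ) : ℝ :=
  (∑ A : Fin n → Bool, ∑ B : Fin n → Bool,
    min 1 ((∑ j, chi (B j) * ((pev p A - pev p (flipAt A j)) / 2)) ^ 2 / (pev p A) ^ 2)) /
    (2 ^ n * 2 ^ n)

/-!
Averaging over `B` first, Khinchine's inequality bounds `α(p)` below by a constant times
`E min(1, |∇p|² / p²)`. By hypercontractivity `|∇p|²` is comparable to its mean with constant
probability, while `p²` is rarely much larger than its mean, so a small `α(p)` forces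
`E |∇p|² ≤ O_d(α) E p²`. The Poincaré inequality turns this into `Var p ≤ O_d(α) (E p)²`.

Hence `sgn p` is nearly constant: where it differs from `sgn E p`, the function `p - E p` is at
least `|E p|` in absolute value, and Markov's inequality for the moment of order `2 ^ (k + 1)`,
again bounded by hypercontractivity, gives this event probability at most
`(3 ^ (d k) O_d(α)) ^ (2 ^ k)`.

Since `√s_f ≤ s_f`, the surface area is at most `2 n` times this probability. With `2 ^ k` of order
`log n`, the exponent `2 ^ k - 1` absorbs the factor `n` provided that `3 ^ (d k) O_d(α)` is small,
and this is where `α ≤ (K log n) ^ (-2d)` enters, as `3 ^ (d k) ≤ (2 ^ k) ^ (2 d)`.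
-/

open scoped BigOperators

section Expectation

variable {Ω ι : Type*} {s : Finset Ω}

lemma expect_sub_expect_sq (hs : s.Nonempty) (f : Ω → ℝ) :
    𝔼 x ∈ s, (f x - 𝔼 y ∈ s, f y) ^ 2 = 𝔼 x ∈ s, f x ^ 2 - (𝔼 x ∈ s, f x) ^ 2 := by
  simp only [sub_sq, expect_add_distrib, expect_sub_distrib, ← expect_mul, ← mul_expect,
    expect_const hs]
  ring

lemma expect_ite_mul_le_expect {F : Ω → ℝ} {t : ℝ} (p : Ω → Prop) [DecidablePred p]
    (hF : ∀ x ∈ s, 0 ≤ F x) (hp : ∀ x ∈ s, p x → t ≤ F x) :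
    (𝔼 x ∈ s, if p x then (1 : ℝ) else 0) * t ≤ 𝔼 x ∈ s, F x := by
  rw [expect_mul]
  refine expect_le_expect fun x hx => ?_
  split_ifs with h
  · simpa using hp x hx h
  · simpa using hF x hx

lemma expect_sq_mul_sq_le {u v : Ω → ℝ} {a b : ℝ} (ha : 0 ≤ a) (hb : 0 ≤ b)
    (hu : 𝔼 x ∈ s, u x ^ 4 ≤ a ^ 2) (hv : 𝔼 x ∈ s, v x ^ 4 ≤ b ^ 2) :
    𝔼 x ∈ s, u x ^ 2 * v x ^ 2 ≤ a * b := by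
  refine le_of_sq_le_sq ?_ (mul_nonneg ha hb)
  calc (𝔼 x ∈ s, u x ^ 2 * v x ^ 2) ^ 2
      ≤ (𝔼 x ∈ s, (u x ^ 2) ^ 2) * 𝔼 x ∈ s, (v x ^ 2) ^ 2 := expect_mul_sq_le_sq_mul_sq s _ _
    _ = (𝔼 x ∈ s, u x ^ 4) * 𝔼 x ∈ s, v x ^ 4 := by simp only [← pow_mul, Nat.reduceMul]
    _ ≤ a ^ 2 * b ^ 2 := by gcongr
    _ = (a * b) ^ 2 := (mul_pow a b 2).symm

lemma expect_sum_sq_sq_le (t : Finset ι) {u : ι → Ω → ℝ} {K : ℝ} (hK : 0 ≤ K)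
    (hu : ∀ i ∈ t, 𝔼 x ∈ s, u i x ^ 4 ≤ (K * 𝔼 x ∈ s, u i x ^ 2) ^ 2) :
    𝔼 x ∈ s, (∑ i ∈ t, u i x ^ 2) ^ 2 ≤ (K * 𝔼 x ∈ s, ∑ i ∈ t, u i x ^ 2) ^ 2 := by
  have hE : ∀ i, 0 ≤ K * 𝔼 x ∈ s, u i x ^ 2 := fun _ =>
    mul_nonneg hK (expect_nonneg fun x _ => sq_nonneg _)
  calc 𝔼 x ∈ s, (∑ i ∈ t, u i x ^ 2) ^ 2
      = ∑ i ∈ t, ∑ j ∈ t, 𝔼 x ∈ s, u i x ^ 2 * u j x ^ 2 := by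
        simp only [sq (∑ _ ∈ t, _), sum_mul_sum, expect_sum_comm]
    _ ≤ ∑ i ∈ t, ∑ j ∈ t, (K * 𝔼 x ∈ s, u i x ^ 2) * (K * 𝔼 x ∈ s, u j x ^ 2) :=
        sum_le_sum fun i hi => sum_le_sum fun j hj =>
          expect_sq_mul_sq_le (hE i) (hE j) (hu i hi) (hu j hj)
    _ = (K * 𝔼 x ∈ s, ∑ i ∈ t, u i x ^ 2) ^ 2 := by
        rw [← sum_mul_sum, ← mul_sum, ← expect_sum_comm, sq]

lemma sub_sq_div_le_min {t u : ℝ} (ht : 0 < t) : u - u ^ 2 / (4 * t) ≤ min t u := by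
  refine le_min ?_ (sub_le_self u (by positivity))
  have : u - u ^ 2 / (4 * t) = t - (u - 2 * t) ^ 2 / (4 * t) := by
    field_simp
    ring
  rw [this]
  exact sub_le_self t (by positivity)

/-- A Paley–Zygmund inequality, obtained by minorizing `min t` by a quadratic polynomial. -/
lemma div_le_expect_min {X : Ω → ℝ} (hX : ∀ x ∈ s, 0 ≤ X x) {R t : ℝ} (hR : 0 < R) (ht : 0 ≤ t)
    (hXR : 𝔼 x ∈ s, X x ^ 2 ≤ R * (𝔼 x ∈ s, X x) ^ 2) (htR : 2 * t ≤ R * 𝔼 x ∈ s, X x) :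
    t / R ≤ 𝔼 x ∈ s, min t (X x) := by
  rcases ht.eq_or_lt with rfl | ht
  · simpa using expect_nonneg fun x hx => le_min le_rfl (hX x hx)
  set m := 𝔼 x ∈ s, X x
  have hRm : 0 < R * m := by linarith
  have hm : m ≠ 0 := right_ne_zero_of_mul hRm.ne'
  set l := 2 * t / (R * m)
  have hl : l ≤ 1 := (div_le_one hRm).mpr htR
  calc t / R = l * m - l ^ 2 / (4 * t) * (R * m ^ 2) := by
        simp only [l]
        field_simp
        norm_num
    _ ≤ l * m - l ^ 2 / (4 * t) * 𝔼 x ∈ s, X x ^ 2 := by gcongr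
    _ = 𝔼 x ∈ s, (l * X x - (l * X x) ^ 2 / (4 * t)) := by
        simp only [mul_pow, mul_div_right_comm, expect_sub_distrib, ← mul_expect]
        rfl
    _ ≤ 𝔼 x ∈ s, min t (X x) := expect_le_expect fun x hx =>
        (sub_sq_div_le_min ht).trans <|
          min_le_min_left t <| mul_le_of_le_one_left (hX x hx) hl

lemma min_div_sub_le_min_one_div {a b t L : ℝ} (ha : 0 ≤ a) (hb : 0 < b) (ht₀ : 0 ≤ t) (ht₁ : t ≤ 1)
    (hL : 0 < L) : min t (a / L) - t / L * b ≤ min 1 (a / b) := by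
  rcases le_total b L with h | h
  · exact (sub_le_self _ (by positivity)).trans <|
      min_le_min ht₁ (div_le_div_of_nonneg_left ha hb h)
  · have : t ≤ t / L * b := by
      rw [div_mul_eq_mul_div, le_div_iff₀ hL]
      exact mul_le_mul_of_nonneg_left h ht₀
    have : 0 ≤ min 1 (a / b) := le_min zero_le_one (by positivity)
    linarith [min_le_left t (a / L)]

/-- `P` exceeds `2 * R * 𝔼 P` rarely, and capping the ratio at `min 1 (𝔼 N / (4 * 𝔼 P))` makes the
loss on that event proportional to the lower bound. -/
lemma min_one_div_le_expect_min_one_div {N P : Ω → ℝ} (hN : ∀ x ∈ s, 0 ≤ N x)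
    (hP : ∀ x ∈ s, 0 < P x) {R : ℝ} (hR : 0 < R)
    (hNR : 𝔼 x ∈ s, N x ^ 2 ≤ R * (𝔼 x ∈ s, N x) ^ 2) :
    min 1 ((𝔼 x ∈ s, N x) / (4 * 𝔼 x ∈ s, P x)) / (2 * R) ≤ 𝔼 x ∈ s, min 1 (N x / P x) := by
  rcases s.eq_empty_or_nonempty with rfl | hs
  · simp
  set W := 𝔼 x ∈ s, P x
  have hW : 0 < W := expect_pos hP hs
  set t := min 1 ((𝔼 x ∈ s, N x) / (4 * W))
  have ht : 0 ≤ t := le_min zero_le_one (div_nonneg (expect_nonneg hN) (by positivity))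
  set L := 2 * R * W
  have hL : 0 < L := by positivity
  have hcap : t / R ≤ 𝔼 x ∈ s, min t (N x / L) := by
    refine div_le_expect_min (fun x hx => div_nonneg (hN x hx) hL.le) hR ht ?_ ?_
    · simp only [div_pow, ← expect_div, ← mul_div_assoc]
      gcongr
    · calc 2 * t ≤ 2 * ((𝔼 x ∈ s, N x) / (4 * W)) := by gcongr; exact min_le_right _ _
        _ = R * 𝔼 x ∈ s, N x / L := by
          simp only [← expect_div, L]
          field_simp
          ring
  calc t / (2 * R) = t / R - t / L * W := by
        simp only [L]
        field_simp
        norm_num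
    _ ≤ (𝔼 x ∈ s, min t (N x / L)) - t / L * W := by gcongr
    _ = 𝔼 x ∈ s, (min t (N x / L) - t / L * P x) := by rw [expect_sub_distrib, mul_expect]
    _ ≤ 𝔼 x ∈ s, min 1 (N x / P x) := expect_le_expect fun x hx =>
        min_div_sub_le_min_one_div (hN x hx) (hP x hx) ht (min_le_left _ _) hL

end Expectation

section Walsh

variable {n : ℕ}

lemma chi_sq (b : Bool) : chi b ^ 2 = 1 := by cases b <;> simp [chi]

lemma chi_not (b : Bool) : chi (!b) = -chi b := by cases b <;> simp [chi]

lemma chi_pow (b : Bool) (k : ℕ) : chi b ^ k = if Odd k then chi b else 1 := by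
  split_ifs with hk
  · obtain ⟨m, rfl⟩ := hk
    rw [pow_succ, pow_mul, chi_sq, one_pow, one_mul]
  · obtain ⟨m, rfl⟩ := (Nat.not_odd_iff_even.mp hk).two_dvd
    rw [pow_mul, chi_sq, one_pow]

lemma one_add_chi_mul_chi (a b : Bool) : 1 + chi a * chi b = if a = b then 2 else 0 := by
  cases a <;> cases b <;> norm_num [chi]

lemma flipAt_self (x : Fin n → Bool) (i : Fin n) : flipAt x i i = !x i :=
  Function.update_self ..

lemma flipAt_of_ne (x : Fin n → Bool) {i j : Fin n} (h : j ≠ i) : flipAt x i j = x j :=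
  Function.update_of_ne h ..

lemma flipAt_involutive (i : Fin n) : Function.Involutive fun x : Fin n → Bool => flipAt x i := by
  intro x
  simp [flipAt]

lemma expect_flipAt (i : Fin n) (F : (Fin n → Bool) → ℝ) : 𝔼 x, F (flipAt x i) = 𝔼 x, F x :=
  Fintype.expect_bijective _ (flipAt_involutive i).bijective _ _ fun _ => rfl

lemma expect_comp_add_chi_mul {i : Fin n} {g h : (Fin n → Bool) → ℝ}
    (hg : ∀ x, g (flipAt x i) = g x) (hh : ∀ x, h (flipAt x i) = h x) (Φ : ℝ → ℝ) :
    𝔼 x, Φ (g x + chi (x i) * h x) = 𝔼 x, (Φ (g x + h x) + Φ (g x - h x)) / 2 := by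
  have hflip : 𝔼 x, Φ (g x + chi (x i) * h x) = 𝔼 x, Φ (g x - chi (x i) * h x) := by
    rw [← expect_flipAt i]
    simp only [hg, hh, flipAt_self, chi_not, neg_mul, ← sub_eq_add_neg]
  calc 𝔼 x, Φ (g x + chi (x i) * h x)
      = 𝔼 x, (Φ (g x + chi (x i) * h x) + Φ (g x - chi (x i) * h x)) / 2 := by
        rw [← expect_div, expect_add_distrib, ← hflip, add_self_div_two]
    _ = 𝔼 x, (Φ (g x + h x) + Φ (g x - h x)) / 2 := by
        refine expect_congr rfl fun x _ => ?_
        cases x i <;> simp [chi, add_comm, sub_eq_add_neg]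

/-- The Walsh function `χ_S`, i.e. the parity of the coordinates in `S`. These are the characters of
the cube, and serve as the monomials of multilinear polynomials. -/
noncomputable def walsh (S : Finset (Fin n)) (x : Fin n → Bool) : ℝ := ∏ i ∈ S, chi (x i)

lemma walsh_empty (x : Fin n → Bool) : walsh ∅ x = 1 := prod_empty

lemma walsh_singleton (i : Fin n) (x : Fin n → Bool) : walsh {i} x = chi (x i) :=
  prod_singleton ..

lemma walsh_insert {S : Finset (Fin n)} {i : Fin n} (hi : i ∉ S) (x : Fin n → Bool) :
    walsh (insert i S) x = chi (x i) * walsh S x :=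
  prod_insert hi

lemma walsh_eq_prod_univ (S : Finset (Fin n)) (x : Fin n → Bool) :
    walsh S x = ∏ i, if i ∈ S then chi (x i) else 1 := by
  rw [walsh, prod_ite_mem, univ_inter]

lemma walsh_flipAt (S : Finset (Fin n)) (x : Fin n → Bool) (i : Fin n) :
    walsh S (flipAt x i) = if i ∈ S then -walsh S x else walsh S x := by
  have hne : ∀ T, i ∉ T → walsh T (flipAt x i) = walsh T x := fun T hT =>
    prod_congr rfl fun j hj => by rw [flipAt_of_ne x (ne_of_mem_of_not_mem hj hT)]
  split_ifs with hi
  · rw [← insert_erase hi, walsh_insert (notMem_erase i S), walsh_insert (notMem_erase i S),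
      hne _ (notMem_erase i S), flipAt_self, chi_not, neg_mul]
  · exact hne S hi

lemma walsh_mul_walsh (S T : Finset (Fin n)) (x : Fin n → Bool) :
    walsh S x * walsh T x = walsh (symmDiff S T) x := by
  simp only [walsh_eq_prod_univ, ← prod_mul_distrib, mem_symmDiff]
  refine prod_congr rfl fun i _ => ?_
  by_cases hS : i ∈ S <;> by_cases hT : i ∈ T <;> simp [hS, hT, ← sq, chi_sq]

lemma expect_walsh (S : Finset (Fin n)) : 𝔼 x, walsh S x = if S = ∅ then 1 else 0 := by
  split_ifs with hS
  · simp [hS, walsh_empty]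
  · obtain ⟨i, hi⟩ := nonempty_iff_ne_empty.mpr hS
    have hneg := expect_flipAt i (walsh S)
    simp only [walsh_flipAt, hi, if_true, expect_neg_distrib] at hneg
    linarith

lemma expect_sum_mul_walsh_sq {ι : Type*} (t : Finset ι) {S : ι → Finset (Fin n)}
    (hS : Function.Injective S) (c : ι → ℝ) :
    𝔼 x, (∑ i ∈ t, c i * walsh (S i) x) ^ 2 = ∑ i ∈ t, c i ^ 2 := by
  have horth (i j : ι) :
      𝔼 x, c i * walsh (S i) x * (c j * walsh (S j) x) = if i = j then c i ^ 2 else 0 := by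
    simp only [mul_mul_mul_comm _ (walsh _ _), walsh_mul_walsh, ← mul_expect, expect_walsh,
      ← bot_eq_empty, symmDiff_eq_bot, hS.eq_iff]
    split_ifs with h
    · rw [h, mul_one, sq]
    · rw [mul_zero]
  simp only [sq (∑ _ ∈ t, _), sum_mul_sum, expect_sum_comm, horth]
  exact sum_congr rfl fun i hi => by simp [hi]

lemma sum_walsh_mul_walsh (x y : Fin n → Bool) :
    ∑ S, walsh S x * walsh S y = if x = y then 2 ^ n else 0 := by
  calc ∑ S, walsh S x * walsh S y = ∏ i, (1 + chi (x i) * chi (y i)) := by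
        simp only [walsh, ← prod_mul_distrib, prod_one_add, powerset_univ]
    _ = if x = y then 2 ^ n else 0 := by
        simp only [one_add_chi_mul_chi, funext_iff]
        split_ifs with h
        · simp [h]
        · obtain ⟨i, hi⟩ := not_forall.mp h
          exact prod_eq_zero (mem_univ i) (if_neg hi)

/-- The Fourier–Walsh coefficient of `f` at `S`. -/
noncomputable def walshCoeff (f : (Fin n → Bool) → ℝ) (S : Finset (Fin n)) : ℝ :=
  𝔼 x, f x * walsh S x

lemma walshCoeff_empty (f : (Fin n → Bool) → ℝ) : walshCoeff f ∅ = 𝔼 x, f x := by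
  simp only [walshCoeff, walsh_empty, mul_one]

lemma sum_walshCoeff_mul_walsh (f : (Fin n → Bool) → ℝ) (x : Fin n → Bool) :
    ∑ S, walshCoeff f S * walsh S x = f x := by
  calc ∑ S, walshCoeff f S * walsh S x = 𝔼 y, f y * ∑ S, walsh S y * walsh S x := by
        simp only [walshCoeff, expect_mul, mul_sum, expect_sum_comm, mul_assoc]
    _ = f x := by
        simp only [sum_walsh_mul_walsh, Fintype.expect_eq_sum_div_card]
        simp

lemma expect_sq_eq_sum_walshCoeff_sq (f : (Fin n → Bool) → ℝ) :
    𝔼 x, f x ^ 2 = ∑ S, walshCoeff f S ^ 2 := by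
  rw [← expect_sum_mul_walsh_sq univ Function.injective_id]
  simp only [id, sum_walshCoeff_mul_walsh]

end Walsh

section Poincare

variable {n : ℕ}

/-- The discrete derivative `D_j f`, normalized so that `D_j χ_S = χ_S` for `j ∈ S`. -/
noncomputable def cubeDeriv (j : Fin n) (f : (Fin n → Bool) → ℝ) (x : Fin n → Bool) : ℝ :=
  (f x - f (flipAt x j)) / 2

/-- The squared Euclidean length `|∇f|²` of the discrete gradient; its mean is the total
influence of `f`. -/
noncomputable def gradSq (f : (Fin n → Bool) → ℝ) (x : Fin n → Bool) : ℝ :=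
  ∑ j, cubeDeriv j f x ^ 2

lemma gradSq_nonneg (f : (Fin n → Bool) → ℝ) (x : Fin n → Bool) : 0 ≤ gradSq f x :=
  sum_nonneg fun _ _ => sq_nonneg _

lemma walshCoeff_cubeDeriv (j : Fin n) (f : (Fin n → Bool) → ℝ) (S : Finset (Fin n)) :
    walshCoeff (cubeDeriv j f) S = if j ∈ S then walshCoeff f S else 0 := by
  have hflip : 𝔼 x, f (flipAt x j) * walsh S x = 𝔼 x, f x * walsh S (flipAt x j) := by
    rw [← expect_flipAt j]
    simp only [flipAt_involutive j _]
  simp only [walshCoeff, cubeDeriv, div_mul_eq_mul_div, sub_mul, ← expect_div, expect_sub_distrib,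
    hflip, walsh_flipAt]
  split_ifs
  · simp only [mul_neg, expect_neg_distrib]
    ring
  · ring

lemma expect_gradSq (f : (Fin n → Bool) → ℝ) :
    𝔼 x, gradSq f x = ∑ S : Finset (Fin n), (#S : ℝ) * walshCoeff f S ^ 2 := by
  simp only [gradSq, expect_sum_comm, expect_sq_eq_sum_walshCoeff_sq, walshCoeff_cubeDeriv]
  rw [sum_comm]
  simp [ite_pow]

lemma expect_sub_expect_sq_le_expect_gradSq (f : (Fin n → Bool) → ℝ) :
    𝔼 x, (f x - 𝔼 y, f y) ^ 2 ≤ 𝔼 x, gradSq f x := by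
  rw [expect_sub_expect_sq univ_nonempty, expect_gradSq, expect_sq_eq_sum_walshCoeff_sq,
    ← walshCoeff_empty, ← sum_erase_eq_sub (mem_univ ∅)]
  calc ∑ S ∈ univ.erase ∅, walshCoeff f S ^ 2
      ≤ ∑ S ∈ univ.erase ∅, (#S : ℝ) * walshCoeff f S ^ 2 := sum_le_sum fun S hS =>
        le_mul_of_one_le_left (sq_nonneg _) <|
          mod_cast card_pos.mpr (nonempty_iff_ne_empty.mpr (ne_of_mem_erase hS))
    _ = ∑ S : Finset (Fin n), (#S : ℝ) * walshCoeff f S ^ 2 := sum_erase _ (by simp)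

end Poincare

section Hypercontractivity

variable {n d e : ℕ} {f g h : (Fin n → Bool) → ℝ}

/-- The functions on the cube of degree at most `d`, encoded as a span of Walsh functions rather
than through representing polynomials, which are not unique on the cube. -/
noncomputable def walshDegreeLE (n d : ℕ) : Submodule ℝ ((Fin n → Bool) → ℝ) :=
  Submodule.span ℝ (walsh '' {S | #S ≤ d})

lemma walsh_mem_walshDegreeLE {S : Finset (Fin n)} (hS : #S ≤ d) : walsh S ∈ walshDegreeLE n d :=
  Submodule.subset_span ⟨S, hS, rfl⟩

lemma const_mem_walshDegreeLE (c : ℝ) : (fun _ => c) ∈ walshDegreeLE n d := by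
  convert (walshDegreeLE n d).smul_mem c (walsh_mem_walshDegreeLE (S := ∅) (by simp)) using 1
  ext x
  simp [walsh_empty]

lemma mem_walshDegreeLE_iff :
    f ∈ walshDegreeLE n d ↔ ∀ S : Finset (Fin n), d < #S → walshCoeff f S = 0 := by
  refine ⟨fun hf S hS => ?_, fun hf => ?_⟩
  · induction hf using Submodule.span_induction with
    | mem _ hT =>
      obtain ⟨T, hT, rfl⟩ := hT
      have hne : T ≠ S := by
        rintro rfl
        exact hS.not_ge hT
      simp [walshCoeff, walsh_mul_walsh, expect_walsh, ← bot_eq_empty, hne]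
    | zero => simp [walshCoeff]
    | add u v _ _ hu hv =>
      simp only [walshCoeff, Pi.add_apply, add_mul, expect_add_distrib] at hu hv ⊢
      rw [hu, hv, add_zero]
    | smul a u _ hu =>
      simp only [walshCoeff, Pi.smul_apply, smul_eq_mul, mul_assoc, ← mul_expect] at hu ⊢
      rw [hu, mul_zero]
  · have hsum : f = ∑ S, walshCoeff f S • walsh S := by
      ext x
      simp [Finset.sum_apply, sum_walshCoeff_mul_walsh]
    rw [hsum]
    refine Submodule.sum_mem _ fun S _ => ?_
    rcases le_or_gt #S d with hS | hS
    · exact Submodule.smul_mem _ _ (walsh_mem_walshDegreeLE hS)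
    · simp [hf S hS]

lemma mul_mem_walshDegreeLE (hf : f ∈ walshDegreeLE n d) (hg : g ∈ walshDegreeLE n e) :
    f * g ∈ walshDegreeLE n (d + e) := by
  have hmul := Submodule.mul_mem_mul hf hg
  rw [walshDegreeLE, walshDegreeLE, Submodule.span_mul_span] at hmul
  refine Submodule.span_le.mpr ?_ hmul
  rintro _ ⟨_, ⟨S, hS, rfl⟩, _, ⟨T, hT, rfl⟩, rfl⟩
  have hST : walsh S * walsh T = walsh (symmDiff S T) := funext (walsh_mul_walsh S T)
  change walsh S * walsh T ∈ walshDegreeLE n (d + e)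
  rw [hST]
  refine walsh_mem_walshDegreeLE ?_
  calc #(symmDiff S T) ≤ #(S ∪ T) := card_le_card symmDiff_le_sup
    _ ≤ #S + #T := card_union_le S T
    _ ≤ d + e := add_le_add hS hT

lemma pow_mem_walshDegreeLE (hf : f ∈ walshDegreeLE n d) (k : ℕ) :
    f ^ k ∈ walshDegreeLE n (d * k) := by
  induction k with
  | zero => exact const_mem_walshDegreeLE 1
  | succ k ih => exact pow_succ f k ▸ mul_mem_walshDegreeLE ih hf

lemma cubeDeriv_mem_walshDegreeLE (hf : f ∈ walshDegreeLE n d) (j : Fin n) :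
    cubeDeriv j f ∈ walshDegreeLE n d :=
  mem_walshDegreeLE_iff.mpr fun S hS => by
    rw [walshCoeff_cubeDeriv, mem_walshDegreeLE_iff.mp hf S hS, ite_self]

lemma expect_add_chi_mul_pow_four_le {i : Fin n} (hg : ∀ x, g (flipAt x i) = g x)
    (hh : ∀ x, h (flipAt x i) = h x) {K : ℝ} (hK : 0 ≤ K)
    (hg4 : 𝔼 x, g x ^ 4 ≤ (3 * K * 𝔼 x, g x ^ 2) ^ 2)
    (hh4 : 𝔼 x, h x ^ 4 ≤ (K * 𝔼 x, h x ^ 2) ^ 2) :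
    𝔼 x, (g x + chi (x i) * h x) ^ 4 ≤ (3 * K * 𝔼 x, (g x + chi (x i) * h x) ^ 2) ^ 2 := by
  have ha : 0 ≤ 𝔼 x, g x ^ 2 := expect_nonneg fun _ _ => sq_nonneg _
  have hb : 0 ≤ 𝔼 x, h x ^ 2 := expect_nonneg fun _ _ => sq_nonneg _
  have h2 : 𝔼 x, (g x + chi (x i) * h x) ^ 2 = (𝔼 x, g x ^ 2) + 𝔼 x, h x ^ 2 := by
    rw [expect_comp_add_chi_mul hg hh (· ^ 2), ← expect_add_distrib]
    exact expect_congr rfl fun x _ => by ring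
  have h4 : 𝔼 x, (g x + chi (x i) * h x) ^ 4
      = (𝔼 x, g x ^ 4) + 6 * (𝔼 x, g x ^ 2 * h x ^ 2) + 𝔼 x, h x ^ 4 := by
    rw [expect_comp_add_chi_mul hg hh (· ^ 4), mul_expect, ← expect_add_distrib,
      ← expect_add_distrib]
    exact expect_congr rfl fun x _ => by ring
  have hgh := expect_sq_mul_sq_le (by positivity) (by positivity) hg4 hh4
  rw [h2, h4]
  set a := 𝔼 x, g x ^ 2
  set b := 𝔼 x, h x ^ 2
  calc (𝔼 x, g x ^ 4) + 6 * (𝔼 x, g x ^ 2 * h x ^ 2) + 𝔼 x, h x ^ 4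
      ≤ (3 * K * a) ^ 2 + 6 * (3 * K * a * (K * b)) + (K * b) ^ 2 := by gcongr
    _ ≤ (3 * K * (a + b)) ^ 2 := by nlinarith [sq_nonneg (K * b)]

lemma sum_powerset_mul_walsh_flipAt {T : Finset (Fin n)} {i : Fin n} (hi : i ∉ T)
    (c : Finset (Fin n) → ℝ) (x : Fin n → Bool) :
    ∑ S ∈ T.powerset, c S * walsh S (flipAt x i) = ∑ S ∈ T.powerset, c S * walsh S x :=
  sum_congr rfl fun S hS => by rw [walsh_flipAt, if_neg (notMem_mono (mem_powerset.mp hS) hi)]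

lemma sum_powerset_insert_mul_walsh {T : Finset (Fin n)} {i : Fin n} (hi : i ∉ T)
    (c : Finset (Fin n) → ℝ) (x : Fin n → Bool) :
    ∑ S ∈ (insert i T).powerset, c S * walsh S x
      = ∑ S ∈ T.powerset, c S * walsh S x
        + chi (x i) * ∑ S ∈ T.powerset, c (insert i S) * walsh S x := by
  rw [sum_powerset_insert hi, mul_sum]
  congr 1
  refine sum_congr rfl fun S hS => ?_
  rw [walsh_insert (notMem_mono (mem_powerset.mp hS) hi), mul_left_comm]

lemma expect_sum_powerset_pow_four_le (T : Finset (Fin n)) (c : Finset (Fin n) → ℝ)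
    (hc : ∀ S ⊆ T, d < #S → c S = 0) :
    𝔼 x, (∑ S ∈ T.powerset, c S * walsh S x) ^ 4
      ≤ (3 ^ d * 𝔼 x, (∑ S ∈ T.powerset, c S * walsh S x) ^ 2) ^ 2 := by
  induction T using Finset.induction_on generalizing d c with
  | empty =>
    simp only [powerset_empty, sum_singleton, walsh_empty, mul_one, Fintype.expect_const]
    have h3 : (1 : ℝ) ≤ (3 ^ d) ^ 2 := one_le_pow₀ (one_le_pow₀ (by norm_num))
    calc c ∅ ^ 4 ≤ (3 ^ d) ^ 2 * c ∅ ^ 4 := le_mul_of_one_le_left (by positivity) h3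
      _ = (3 ^ d * c ∅ ^ 2) ^ 2 := by ring
  | insert i T hi ih =>
    have hg4 := ih c fun S hS => hc S (hS.trans (subset_insert i T))
    have hcard {S : Finset (Fin n)} (hS : S ⊆ T) : #(insert i S) = #S + 1 :=
      card_insert_of_notMem (notMem_mono hS hi)
    simp only [sum_powerset_insert_mul_walsh hi]
    cases d with
    | zero =>
      have hh0 (x : Fin n → Bool) : ∑ S ∈ T.powerset, c (insert i S) * walsh S x = 0 :=
        sum_eq_zero fun S hS => by
          have hST := mem_powerset.mp hS
          rw [hc _ (insert_subset_insert i hST) (hcard hST ▸ Nat.succ_pos _), zero_mul]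
      simpa only [hh0, mul_zero, add_zero] using hg4
    | succ d =>
      have hh4 := ih (d := d) (fun S => c (insert i S)) fun S hST hS =>
        hc _ (insert_subset_insert i hST) (hcard hST ▸ Nat.succ_lt_succ hS)
      rw [pow_succ' 3 d] at hg4 ⊢
      exact expect_add_chi_mul_pow_four_le (sum_powerset_mul_walsh_flipAt hi c)
        (sum_powerset_mul_walsh_flipAt hi fun S => c (insert i S)) (by positivity) hg4 hh4

/-- The Bonami lemma. -/
lemma expect_pow_four_le (hf : f ∈ walshDegreeLE n d) :
    𝔼 x, f x ^ 4 ≤ (3 ^ d * 𝔼 x, f x ^ 2) ^ 2 := by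
  simpa only [powerset_univ, sum_walshCoeff_mul_walsh] using
    expect_sum_powerset_pow_four_le univ (walshCoeff f)
      fun S _ => mem_walshDegreeLE_iff.mp hf S

lemma expect_pow_two_pow_le (hf : f ∈ walshDegreeLE n d) (k : ℕ) :
    𝔼 x, f x ^ 2 ^ (k + 1) ≤ (3 ^ (d * k) * 𝔼 x, f x ^ 2) ^ 2 ^ k := by
  induction k with
  | zero => simp
  | succ k ih =>
    calc 𝔼 x, f x ^ 2 ^ (k + 2) = 𝔼 x, (f ^ 2 ^ k) x ^ 4 := by
          simp only [Pi.pow_apply, ← pow_mul, pow_add, Nat.reducePow]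
      _ ≤ (3 ^ (d * 2 ^ k) * 𝔼 x, (f ^ 2 ^ k) x ^ 2) ^ 2 :=
          expect_pow_four_le (pow_mem_walshDegreeLE hf _)
      _ = (3 ^ (d * 2 ^ k) * 𝔼 x, f x ^ 2 ^ (k + 1)) ^ 2 := by
          simp only [Pi.pow_apply, ← pow_mul, ← pow_succ]
      _ ≤ (3 ^ (d * 2 ^ k) * (3 ^ (d * k) * 𝔼 x, f x ^ 2) ^ 2 ^ k) ^ 2 := by
          have heven : Even (2 ^ (k + 1)) := even_two.pow_of_ne_zero k.succ_ne_zero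
          have hnonneg : 0 ≤ 𝔼 x, f x ^ 2 ^ (k + 1) := expect_nonneg fun x _ => heven.pow_nonneg _
          gcongr
      _ = (3 ^ (d * (k + 1)) * 𝔼 x, f x ^ 2) ^ 2 ^ (k + 1) := by
          rw [pow_mul 3 d (2 ^ k), ← mul_pow, ← pow_mul, ← pow_succ, mul_add_one, pow_add 3,
            ← mul_assoc, mul_comm (3 ^ d)]

lemma expect_gradSq_sq_le (hf : f ∈ walshDegreeLE n d) :
    𝔼 x, gradSq f x ^ 2 ≤ (3 ^ d * 𝔼 x, gradSq f x) ^ 2 :=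
  expect_sum_sq_sq_le univ (by positivity) fun j _ =>
    expect_pow_four_le (cubeDeriv_mem_walshDegreeLE hf j)

end Hypercontractivity

section Khinchine

variable {n : ℕ}

lemma min_one_sum_sq_div_nine_le_expect_min_one (c : Fin n → ℝ) :
    min 1 (∑ j, c j ^ 2) / 9 ≤ 𝔼 v : Fin n → Bool, min 1 ((∑ j, chi (v j) * c j) ^ 2) := by
  set L : (Fin n → Bool) → ℝ := fun v => ∑ j, chi (v j) * c j
  have hLwalsh (v : Fin n → Bool) : L v = ∑ j, c j * walsh {j} v := by
    simp only [L, walsh_singleton, mul_comm]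
  have hL : L ∈ walshDegreeLE n 1 := by
    have : L = ∑ j, c j • walsh {j} := by
      ext v
      simp [hLwalsh, Finset.sum_apply]
    rw [this]
    exact Submodule.sum_mem _ fun j _ =>
      Submodule.smul_mem _ _ (walsh_mem_walshDegreeLE (card_singleton j).le)
  have h2 : 𝔼 v, L v ^ 2 = ∑ j, c j ^ 2 := by
    simp only [hLwalsh]
    exact expect_sum_mul_walsh_sq univ singleton_injective c
  have h4 : 𝔼 v, (L v ^ 2) ^ 2 ≤ 9 * (𝔼 v, L v ^ 2) ^ 2 := by
    simp only [← pow_mul]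
    convert expect_pow_four_le hL using 1
    ring
  have hσ : 0 ≤ ∑ j, c j ^ 2 := sum_nonneg fun _ _ => sq_nonneg _
  set t := min 1 (∑ j, c j ^ 2)
  refine (div_le_expect_min (fun v _ => sq_nonneg (L v)) (by norm_num)
    (le_min zero_le_one hσ) h4 ?_).trans
      (expect_le_expect fun v _ => min_le_min_right _ (min_le_left _ _))
  rw [h2]
  linarith [min_le_right 1 (∑ j, c j ^ 2)]

end Khinchine

section Alpha

variable {n d : ℕ} {g : (Fin n → Bool) → ℝ}

/-- The quantity `α` of an arbitrary function on the cube; `alphaP p` is `alpha (pev p)`. -/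
noncomputable def alpha (g : (Fin n → Bool) → ℝ) : ℝ :=
  𝔼 x, 𝔼 v : Fin n → Bool, min 1 ((∑ j, chi (v j) * cubeDeriv j g x) ^ 2 / g x ^ 2)

lemma alphaP_eq_alpha (p : MvPolynomial (Fin n) ℝ) : alphaP p = alpha (pev p) := by
  simp only [alphaP, alpha, Fintype.expect_eq_sum_div_card, sum_div, div_div]
  simp [cubeDeriv]

lemma alpha_nonneg (g : (Fin n → Bool) → ℝ) : 0 ≤ alpha g :=
  expect_nonneg fun _ _ => expect_nonneg fun _ _ => le_min zero_le_one (by positivity)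

lemma expect_min_one_gradSq_div_sq_le_nine_mul_alpha (g : (Fin n → Bool) → ℝ) :
    𝔼 x, min 1 (gradSq g x / g x ^ 2) ≤ 9 * alpha g := by
  rw [alpha, mul_expect]
  refine expect_le_expect fun x _ => ?_
  have h := min_one_sum_sq_div_nine_le_expect_min_one fun j => cubeDeriv j g x / g x
  simp only [div_pow, ← sum_div, ← mul_div_assoc] at h
  rw [div_le_iff₀' (by norm_num)] at h
  exact h

lemma expect_gradSq_le (hg : g ∈ walshDegreeLE n d) (hg₀ : ∀ x, g x ≠ 0)
    (hα : 18 * 9 ^ d * alpha g < 1) :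
    𝔼 x, gradSq g x ≤ 72 * 9 ^ d * alpha g * 𝔼 x, g x ^ 2 := by
  have hpos : 0 < 𝔼 x, g x ^ 2 := expect_pos (fun x _ => sq_pos_of_ne_zero (hg₀ x)) univ_nonempty
  have h9 : ((3 : ℝ) ^ d) ^ 2 = 9 ^ d := by rw [← pow_mul', pow_mul]; norm_num
  have hgrad : 𝔼 x, gradSq g x ^ 2 ≤ 9 ^ d * (𝔼 x, gradSq g x) ^ 2 := by
    rw [← h9, ← mul_pow]
    exact expect_gradSq_sq_le hg
  have hmin := (min_one_div_le_expect_min_one_div (fun x _ => gradSq_nonneg g x)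
    (fun x _ => sq_pos_of_ne_zero (hg₀ x)) (by positivity) hgrad).trans
      (expect_min_one_gradSq_div_sq_le_nine_mul_alpha g)
  rw [div_le_iff₀ (by positivity)] at hmin
  have hdiv : (𝔼 x, gradSq g x) / (4 * 𝔼 x, g x ^ 2) ≤ 18 * 9 ^ d * alpha g := by
    rcases min_le_iff.mp hmin with h | h <;> linarith
  rw [div_le_iff₀ (by positivity)] at hdiv
  linarith

lemma expect_sub_expect_sq_le_mul_alpha (hg : g ∈ walshDegreeLE n d) (hg₀ : ∀ x, g x ≠ 0)
    (hα : 144 * 9 ^ d * alpha g ≤ 1) :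
    𝔼 x, (g x - 𝔼 y, g y) ^ 2 ≤ 144 * 9 ^ d * alpha g * (𝔼 x, g x) ^ 2 := by
  have hgrad := expect_gradSq_le hg hg₀ (by linarith)
  have hpoinc := expect_sub_expect_sq_le_expect_gradSq g
  have hvar := expect_sub_expect_sq univ_nonempty g
  have hnonneg : 0 ≤ 𝔼 x, (g x - 𝔼 y, g y) ^ 2 := expect_nonneg fun _ _ => sq_nonneg _
  set V := 𝔼 x, (g x - 𝔼 y, g y) ^ 2
  have hV : V ≤ 72 * 9 ^ d * alpha g * (V + (𝔼 x, g x) ^ 2) := by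
    rw [eq_sub_iff_add_eq.mp hvar]
    exact hpoinc.trans hgrad
  have hhalf : 144 * 9 ^ d * alpha g * V ≤ V := mul_le_of_le_one_left hnonneg hα
  linarith

lemma expect_ne_zero_of_expect_sub_expect_sq_le (hg₀ : ∀ x, g x ≠ 0) {a : ℝ}
    (ha : 𝔼 x, (g x - 𝔼 y, g y) ^ 2 ≤ a * (𝔼 x, g x) ^ 2) : 𝔼 x, g x ≠ 0 := by
  intro h
  simp only [h, sub_zero, zero_pow two_ne_zero, mul_zero] at ha
  have : 0 < 𝔼 x, g x ^ 2 := expect_pos (fun x _ => sq_pos_of_ne_zero (hg₀ x)) univ_nonempty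
  exact ha.not_gt this

end Alpha

section SurfaceArea

variable {n d : ℕ}

lemma sq_le_sub_sq_of_sign_ne {a b : ℝ} (h : Real.sign a ≠ Real.sign b) : b ^ 2 ≤ (a - b) ^ 2 := by
  have hab : a * b ≤ 0 := by
    by_contra! hab
    rcases pos_and_pos_or_neg_and_neg_of_mul_pos hab with ⟨ha, hb⟩ | ⟨ha, hb⟩
    · exact h (by rw [Real.sign_of_pos ha, Real.sign_of_pos hb])
    · exact h (by rw [Real.sign_of_neg ha, Real.sign_of_neg hb])
  nlinarith [sq_nonneg a]

lemma expect_sign_ne_le {g : (Fin n → Bool) → ℝ} (hg : g ∈ walshDegreeLE n d) {a μ : ℝ}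
    (hμ : μ ≠ 0) (ha : 𝔼 x, (g x - μ) ^ 2 ≤ a * μ ^ 2) (k : ℕ) :
    (𝔼 x, if Real.sign (g x) ≠ Real.sign μ then (1 : ℝ) else 0) ≤ (3 ^ (d * k) * a) ^ 2 ^ k := by
  have hμ2 : 0 < μ ^ 2 := by positivity
  have heven : Even (2 ^ (k + 1)) := even_two.pow_of_ne_zero k.succ_ne_zero
  have hsub : (fun x => g x - μ) ∈ walshDegreeLE n d :=
    Submodule.sub_mem _ hg (const_mem_walshDegreeLE μ)
  refine le_of_mul_le_mul_right ?_ (pow_pos hμ2 (2 ^ k))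
  calc (𝔼 x, if Real.sign (g x) ≠ Real.sign μ then (1 : ℝ) else 0) * (μ ^ 2) ^ 2 ^ k
      ≤ 𝔼 x, (g x - μ) ^ 2 ^ (k + 1) := by
        refine expect_ite_mul_le_expect _ (fun x _ => heven.pow_nonneg _) fun x _ hx => ?_
        rw [pow_succ' 2 k, pow_mul]
        exact pow_le_pow_left₀ hμ2.le (sq_le_sub_sq_of_sign_ne hx) _
    _ ≤ (3 ^ (d * k) * 𝔼 x, (g x - μ) ^ 2) ^ 2 ^ k := expect_pow_two_pow_le hsub k
    _ ≤ (3 ^ (d * k) * (a * μ ^ 2)) ^ 2 ^ k := by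
        have : 0 ≤ 𝔼 x, (g x - μ) ^ 2 := expect_nonneg fun _ _ => sq_nonneg _
        gcongr
    _ = (3 ^ (d * k) * a) ^ 2 ^ k * (μ ^ 2) ^ 2 ^ k := by rw [← mul_assoc, mul_pow]

lemma sqrt_sens_le (f : (Fin n → Bool) → ℝ) (s : ℝ) (x : Fin n → Bool) :
    √(sens f x) ≤ ∑ i, ((if f x ≠ s then 1 else 0) + if f (flipAt x i) ≠ s then 1 else 0) := by
  have hself : (sens f x : ℝ) ≤ (sens f x : ℝ) ^ 2 := mod_cast Nat.le_self_pow two_ne_zero _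
  calc √(sens f x) ≤ sens f x := Real.sqrt_le_iff.mpr ⟨Nat.cast_nonneg _, hself⟩
    _ = ∑ i, if f (flipAt x i) ≠ f x then 1 else 0 := by rw [sens, ← sum_boole]
    _ ≤ ∑ i, ((if f x ≠ s then 1 else 0) + if f (flipAt x i) ≠ s then 1 else 0) :=
        sum_le_sum fun i _ => by split_ifs <;> simp_all

lemma BSA_le_two_mul_mul_expect (f : (Fin n → Bool) → ℝ) (s : ℝ) :
    BSA f ≤ 2 * n * 𝔼 x, if f x ≠ s then 1 else 0 := by
  calc BSA f = 𝔼 x, √(sens f x) := by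
        simp [BSA, Fintype.expect_eq_sum_div_card]
    _ ≤ 𝔼 x, ∑ i, ((if f x ≠ s then 1 else 0) + if f (flipAt x i) ≠ s then 1 else 0) :=
        expect_le_expect fun x _ => sqrt_sens_le f s x
    _ = 2 * n * 𝔼 x, if f x ≠ s then 1 else 0 := by
        have hflip (i : Fin n) := expect_flipAt i fun x => if f x ≠ s then (1 : ℝ) else 0
        simp only [expect_sum_comm, expect_add_distrib, hflip, sum_const, card_univ,
          Fintype.card_fin, nsmul_eq_mul]
        ring

lemma pev_mem_walshDegreeLE {p : MvPolynomial (Fin n) ℝ} (hp : p.totalDegree ≤ d) :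
    pev p ∈ walshDegreeLE n d := by
  have hsum : pev p = ∑ m ∈ p.support, p.coeff m • walsh (univ.filter fun i => Odd (m i)) := by
    ext x
    simp [pev, MvPolynomial.eval_eq', chi_pow, walsh, prod_filter, Finset.sum_apply]
  rw [hsum]
  refine Submodule.sum_mem _ fun m hm => Submodule.smul_mem _ _ (walsh_mem_walshDegreeLE ?_)
  calc #(univ.filter fun i => Odd (m i)) ≤ #m.support := card_le_card fun i hi => by
        simpa using (mem_filter.mp hi).2.pos.ne'
    _ ≤ ∑ i ∈ m.support, m i := by
        simpa using card_nsmul_le_sum m.support m 1 fun i hi =>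
          Nat.one_le_iff_ne_zero.mpr (Finsupp.mem_support_iff.mp hi)
    _ ≤ d := (MvPolynomial.le_totalDegree hm).trans hp

end SurfaceArea

section Numerics

lemma exists_two_pow_le_four_mul_log {n : ℕ} (hn : 2 ≤ n) :
    ∃ k : ℕ, 2 ^ (k + 1) ≤ 4 * Real.log n ∧ (n : ℝ) ≤ 3 ^ (2 ^ (k + 1) - 1) := by
  have hn2 : (2 : ℝ) ≤ n := mod_cast hn
  have hlog : 1 ≤ 2 * Real.log n := by
    linarith [Real.log_two_gt_d9, Real.log_le_log two_pos hn2]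
  obtain ⟨k, hk, hk'⟩ := exists_nat_pow_near hlog one_lt_two
  refine ⟨k, by rw [pow_succ]; linarith, ?_⟩
  have hm : Real.log n ≤ (2 ^ (k + 1) - 1 : ℕ) := by
    have : (1 : ℝ) ≤ 2 ^ k := one_le_pow₀ one_le_two
    push_cast [Nat.one_le_two_pow]
    rw [pow_succ] at hk' ⊢
    linarith
  calc (n : ℝ) = Real.exp (Real.log n) := (Real.exp_log (by linarith)).symm
    _ ≤ Real.exp (2 ^ (k + 1) - 1 : ℕ) := Real.exp_le_exp.mpr hm
    _ = Real.exp 1 ^ (2 ^ (k + 1) - 1) := Real.exp_one_pow _ |>.symm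
    _ ≤ 3 ^ (2 ^ (k + 1) - 1) := by
        gcongr
        exact Real.exp_one_lt_three.le

lemma mul_three_pow_mul_le_one {d k : ℕ} (hd : 1 ≤ d) {a D L : ℝ} (hD : 1 ≤ D) (hL : 0 < L)
    (hk : 2 ^ k ≤ 4 * L) (ha : a ≤ (4 * D * L) ^ (-(2 * (d : ℝ)))) :
    D * (3 ^ (d * k) * a) ≤ 1 := by
  have hrpow : (4 * D * L) ^ (-(2 * (d : ℝ))) = (D ^ (2 * d) * (4 * L) ^ (2 * d))⁻¹ := by
    rw [Real.rpow_neg (by positivity), ← mul_pow, ← Real.rpow_natCast]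
    push_cast
    ring_nf
  have h3 : (3 : ℝ) ^ (d * k) ≤ (4 * L) ^ (2 * d) := by
    calc (3 : ℝ) ^ (d * k) ≤ (2 ^ 2) ^ (d * k) := by gcongr; norm_num
      _ = (2 ^ k) ^ (2 * d) := by rw [← pow_mul, ← pow_mul, mul_comm k, mul_assoc]
      _ ≤ (4 * L) ^ (2 * d) := by gcongr
  have hDpow : D ≤ D ^ (2 * d) := le_self_pow₀ hD (by omega)
  rw [hrpow] at ha
  calc D * (3 ^ (d * k) * a)
      ≤ D * (3 ^ (d * k) * (D ^ (2 * d) * (4 * L) ^ (2 * d))⁻¹) := by gcongr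
    _ ≤ D ^ (2 * d) * ((4 * L) ^ (2 * d) * (D ^ (2 * d) * (4 * L) ^ (2 * d))⁻¹) := by gcongr
    _ = 1 := by
        have : 0 < D ^ (2 * d) := by positivity
        field_simp

lemma two_mul_mul_pow_le {d k : ℕ} {a C N : ℝ} (ha : 0 ≤ a) (hC : 1 ≤ C) (hN : 0 ≤ N)
    (hN3 : N ≤ 3 ^ (2 ^ (k + 1) - 1))
    (hsmall : 6 * C * 3 ^ d * (3 ^ (d * (k + 1)) * (C * a)) ≤ 1) :
    2 * N * (3 ^ (d * (k + 1)) * (C * a)) ^ 2 ^ (k + 1) ≤ a := by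
  set m := 2 ^ (k + 1) - 1
  set x := 3 ^ (d * (k + 1)) * (C * a)
  have hlt : k + 1 < 2 ^ (k + 1) := Nat.lt_two_pow_self
  have hm : k + 1 ≤ m := Nat.le_sub_one_of_lt hlt
  have : 0 ≤ x := by positivity
  calc 2 * N * x ^ 2 ^ (k + 1) = 2 * N * C * 3 ^ (d * (k + 1)) * x ^ m * a := by
        rw [← Nat.sub_add_cancel (Nat.one_le_two_pow (n := k + 1)), pow_succ]
        ring
    _ ≤ 2 ^ m * 3 ^ m * C ^ m * 3 ^ (d * m) * x ^ m * a := by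
        gcongr
        · exact le_self_pow₀ one_le_two (by omega)
        · exact le_self_pow₀ hC (by omega)
        · norm_num
    _ = (6 * C * 3 ^ d * x) ^ m * a := by
        rw [pow_mul, ← mul_pow, ← mul_pow, ← mul_pow, ← mul_pow]
        norm_num
    _ ≤ a := mul_le_of_le_one_left ha (pow_le_one₀ (by positivity) hsmall)

lemma exists_pos_forall_two_mul_pow_le {d : ℕ} (hd : 1 ≤ d) {C : ℝ} (hC : 1 ≤ C) :
    ∃ K : ℝ, 0 < K ∧ ∀ n : ℕ, 2 ≤ n → ∀ a : ℝ, 0 ≤ a →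
      a ≤ (K * Real.log n) ^ (-(2 * (d : ℝ))) →
      C * a ≤ 1 ∧ ∃ k : ℕ, 2 * n * (3 ^ (d * k) * (C * a)) ^ 2 ^ k ≤ a := by
  have h3 (k : ℕ) : (1 : ℝ) ≤ 3 ^ k := one_le_pow₀ (by norm_num)
  set D := 6 * C * 3 ^ d * C
  have hD : 1 ≤ 6 * C * 3 ^ d := by nlinarith [h3 d]
  refine ⟨4 * D, by positivity, fun n hn a ha haK => ?_⟩
  obtain ⟨k, hk, hn3⟩ := exists_two_pow_le_four_mul_log hn
  have hsmall : 6 * C * 3 ^ d * (3 ^ (d * (k + 1)) * (C * a)) ≤ 1 := by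
    have := mul_three_pow_mul_le_one hd (one_le_mul_of_one_le_of_one_le hD hC)
      (Real.log_pos (by exact_mod_cast hn)) hk haK
    linarith
  refine ⟨?_, k + 1, two_mul_mul_pow_le ha hC n.cast_nonneg hn3 hsmall⟩
  calc C * a ≤ 3 ^ (d * (k + 1)) * (C * a) := le_mul_of_one_le_left (by positivity) (h3 _)
    _ ≤ 6 * C * 3 ^ d * (3 ^ (d * (k + 1)) * (C * a)) := le_mul_of_one_le_left (by positivity) hD
    _ ≤ 1 := hsmall

end Numerics

theorem bsa_le_alpha_of_small_alpha_general (d : ℕ) (hd : 1 ≤ d) :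
    ∃ K : ℝ, 0 < K ∧ ∀ n : ℕ, 2 ≤ n → ∀ (f : (Fin n → Bool) → ℝ)
      (p : MvPolynomial (Fin n) ℝ), p.totalDegree ≤ d →
      (∀ x, pev p x ≠ 0 ∧ f x = Real.sign (pev p x)) →
      alphaP p ≤ (K * Real.log n) ^ (-(2 * (d : ℝ))) →
      BSA f ≤ alphaP p := by
  have hC : (1 : ℝ) ≤ 144 * 9 ^ d := by linarith [one_le_pow₀ (n := d) (by norm_num : (1 : ℝ) ≤ 9)]
  obtain ⟨K, hK, hnum⟩ := exists_pos_forall_two_mul_pow_le hd hC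
  refine ⟨K, hK, fun n hn f p hp hf hα => ?_⟩
  have hg := pev_mem_walshDegreeLE hp
  have hg₀ x := (hf x).1
  rw [alphaP_eq_alpha] at hα ⊢
  obtain ⟨hsmall, k, hk⟩ := hnum n hn _ (alpha_nonneg _) hα
  have hvar := expect_sub_expect_sq_le_mul_alpha hg hg₀ hsmall
  have hμ := expect_ne_zero_of_expect_sub_expect_sq_le hg₀ hvar
  calc BSA f ≤ 2 * n * 𝔼 x, if f x ≠ Real.sign (𝔼 x, pev p x) then 1 else 0 :=
        BSA_le_two_mul_mul_expect f _
    _ ≤ 2 * n * (3 ^ (d * k) * (144 * 9 ^ d * alpha (pev p))) ^ 2 ^ k := by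
        gcongr
        simp only [fun x => (hf x).2]
        exact expect_sign_ne_le hg hμ hvar k
    _ ≤ alpha (pev p) := hk

/-- If `α(p)` is very small then `BSA[sgn p] ≤ α(p)`. -/
theorem bsa_le_alpha_of_small_alpha (d : ℕ) (hd : 1 ≤ d) :
    ∃ K : ℝ, 0 < K ∧ ∀ n : ℕ, 2 ≤ n → ∀ (f : (Fin n → Bool) → ℝ)
      (p : MvPolynomial (Fin n) ℝ),
      (∀ m ∈ p.support, ∀ i, m i ≤ 1) → p.totalDegree ≤ d →
      (∀ x, pev p x ≠ 0 ∧ f x = Real.sign (pev p x)) →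
      alphaP p ≤ (K * Real.log n) ^ (-(2 * (d : ℝ))) →
      BSA f ≤ alphaP p := by
  obtain ⟨K, hK, h⟩ := bsa_le_alpha_of_small_alpha_general d hd
  exact ⟨K, hK, fun n hn f p _ => h n hn f p⟩
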